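/- For real θ with 0 ≤ θ ≤ π, the dilogarithm on the unit circle satisfies Li₂(e^{2iθ}) = π²/6 + θ(θ-π) + 2i·Λ(θ), where Λ is the Lobachevsky function. -/

import Mathlib

open Complex

/-- The dilogarithm function `Li₂(z) = -∫₀^z log(1-u)/u du`. -/
noncomputable def Li2 (z : ℂ) : ℂ :=
  -∫ t in (0:ℝ)..1, Complex.log (1 - (t : ℂ) * z) / (t : ℂ)

/-- The Lobachevsky function `Λ(θ) = -∫₀^θ log|2 sin t| dt`. -/
noncomputable def Lob (θ : ℝ) : ℝ :=
  -∫ t in (0:ℝ)..θ, Real.log |2 * Real.sin t|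

/-!
Since `w Li₂'(w) = -log(1 - w)`, moving along an arc of a circle about the origin gives
`Li₂(z e^{iθ}) = Li₂(z) - i ∫₀^θ log(1 - z e^{it}) dt`. Inside the unit disc this is termwise
integration of `-log(1 - w) = ∑ wⁿ/n`, and it extends to the unit circle by letting `r z → z`
radially. At `z = 1` the initial value is `Li₂(1) = ζ(2) = π²/6`, and
`log(1 - e^{2it}) = log(2 sin t) + i(t - π/2)` splits the integral into the Lobachevsky function
and a quadratic polynomial.
-/

section

open MeasureTheory Filter Topology

section PowerSeries

lemma norm_ofReal_mul_le_one {r : ℝ} (hr0 : 0 ≤ r) (hr1 : r ≤ 1) {z : ℂ} (hz : ‖z‖ ≤ 1) :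
    ‖r * z‖ ≤ 1 := by
  rw [norm_mul, norm_real, Real.norm_of_nonneg hr0]
  exact mul_le_one₀ hr1 (norm_nonneg z) hz

lemma norm_ofReal_mul_lt_one {r : ℝ} (hr0 : 0 ≤ r) (hr1 : r < 1) {z : ℂ} (hz : ‖z‖ ≤ 1) :
    ‖r * z‖ < 1 := by
  rw [norm_mul, norm_real, Real.norm_of_nonneg hr0]
  exact (mul_le_of_le_one_right hr0 hz).trans_lt hr1

lemma hasSum_neg_log_one_sub_mul_div {z t : ℂ} (ht : t ≠ 0) (htz : ‖t * z‖ < 1) :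
    HasSum (fun n : ℕ ↦ z ^ (n + 1) / (n + 1) * t ^ n) (-(log (1 - t * z) / t)) := by
  have h := (hasSum_taylorSeries_neg_log' htz).div_const t
  rw [neg_div] at h
  refine h.congr_fun fun n ↦ ?_
  field_simp
  ring

lemma setIntegral_Ioc_zero_one_norm_const_mul_pow (c : ℂ) (n : ℕ) :
    ∫ t : ℝ in Set.Ioc 0 1, ‖c * (t : ℂ) ^ n‖ = ‖c‖ / (n + 1) := by
  have h_norm : ∀ t ∈ Set.Ioc (0 : ℝ) 1, ‖c * (t : ℂ) ^ n‖ = ‖c‖ * t ^ n := fun t ht ↦ by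
    rw [norm_mul, norm_pow, norm_real, Real.norm_of_nonneg ht.1.le]
  rw [setIntegral_congr_fun measurableSet_Ioc h_norm, integral_const_mul,
    ← intervalIntegral.integral_of_le zero_le_one, integral_pow]
  simp [div_eq_mul_inv]

lemma setIntegral_Ioc_zero_one_const_mul_pow (c : ℂ) (n : ℕ) :
    ∫ t : ℝ in Set.Ioc 0 1, c * (t : ℂ) ^ n = c / (n + 1) := by
  rw [integral_const_mul, ← intervalIntegral.integral_of_le zero_le_one]
  simp_rw [← ofReal_pow]
  rw [intervalIntegral.integral_ofReal, integral_pow]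
  simp [div_eq_mul_inv]

-- The `n = 0` term is `1 / 0 = 0`.
lemma hasSum_Li2 {z : ℂ} (hz : ‖z‖ ≤ 1) :
    HasSum (fun n : ℕ ↦ z ^ n / (n : ℂ) ^ 2) (Li2 z) := by
  let F (n : ℕ) (t : ℝ) : ℂ := z ^ (n + 1) / (n + 1) * (t : ℂ) ^ n
  have h_int (n : ℕ) : Integrable (F n) (volume.restrict (Set.Ioc 0 1)) :=
    Continuous.integrableOn_Ioc (by fun_prop)
  have h_summable : Summable fun n ↦ ∫ t in Set.Ioc 0 1, ‖F n t‖ := by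
    refine .of_nonneg_of_le (fun n ↦ by positivity) (fun n ↦ ?_)
      ((summable_nat_add_iff 1).mpr (Real.summable_one_div_nat_pow.mpr one_lt_two))
    calc ∫ t in Set.Ioc 0 1, ‖F n t‖ = ‖z‖ ^ (n + 1) / ((n + 1 : ℕ) : ℝ) ^ 2 := by
          rw [setIntegral_Ioc_zero_one_norm_const_mul_pow, norm_div, norm_pow,
            ← Nat.cast_succ, norm_natCast, div_div, ← Nat.cast_succ, ← sq]
      _ ≤ 1 / ((n + 1 : ℕ) : ℝ) ^ 2 := by
          gcongr
          exact pow_le_one₀ (norm_nonneg z) hz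
  have h_sum := hasSum_integral_of_summable_integral_norm h_int h_summable
  have h_Li2 : ∫ t in Set.Ioc 0 1, ∑' n, F n t = Li2 z := by
    rw [Li2, ← intervalIntegral.integral_neg, intervalIntegral.integral_of_le zero_le_one,
      integral_Ioc_eq_integral_Ioo, integral_Ioc_eq_integral_Ioo]
    refine setIntegral_congr_fun measurableSet_Ioo fun t ht ↦ ?_
    exact (hasSum_neg_log_one_sub_mul_div (ofReal_ne_zero.mpr ht.1.ne')
      (norm_ofReal_mul_lt_one ht.1.le ht.2 hz)).tsum_eq
  rw [h_Li2] at h_sum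
  rw [← hasSum_nat_add_iff' 1]
  simpa [F, setIntegral_Ioc_zero_one_const_mul_pow, div_div, sq] using h_sum

lemma Li2_one : Li2 1 = Real.pi ^ 2 / 6 := by
  refine (hasSum_Li2 norm_one.le).unique ?_
  simpa using hasSum_ofReal.mpr hasSum_zeta_two

lemma continuousOn_Li2 : ContinuousOn Li2 (Metric.closedBall 0 1) := by
  have h_tsum : Set.EqOn Li2 (fun z ↦ ∑' n : ℕ, z ^ n / (n : ℂ) ^ 2) (Metric.closedBall 0 1) :=
    fun z hz ↦ (hasSum_Li2 (mem_closedBall_zero_iff.mp hz)).tsum_eq.symm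
  refine ContinuousOn.congr (continuousOn_tsum (fun n ↦ by fun_prop)
    (Real.summable_one_div_nat_pow.mpr one_lt_two) fun n z hz ↦ ?_) h_tsum
  rw [norm_div, norm_pow, norm_pow, norm_natCast]
  gcongr
  exact pow_le_one₀ (norm_nonneg z) (mem_closedBall_zero_iff.mp hz)

lemma tendsto_Li2_ofReal_mul {z : ℂ} (hz : ‖z‖ ≤ 1) :
    Tendsto (fun r : ℝ ↦ Li2 (r * z)) (𝓝[<] 1) (𝓝 (Li2 z)) := by
  have h_cont : ContinuousOn (fun r : ℝ ↦ Li2 (r * z)) (Set.Icc 0 1) :=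
    continuousOn_Li2.comp (by fun_prop) fun r hr ↦
      mem_closedBall_zero_iff.mpr (norm_ofReal_mul_le_one hr.1 hr.2 hz)
  have h_tendsto := (h_cont 1 (Set.right_mem_Icc.mpr zero_le_one)).tendsto.mono_left
    (nhdsWithin_le_of_mem (Icc_mem_nhdsLT zero_lt_one))
  simpa using h_tendsto

end PowerSeries

section OpenDisc

lemma norm_mul_exp_ofReal_mul_I (z : ℂ) (t : ℝ) : ‖z * exp (t * I)‖ = ‖z‖ := by
  rw [norm_mul, norm_exp_ofReal_mul_I, mul_one]

lemma integral_mul_exp_mul_I_pow_div (z : ℂ) (θ : ℝ) (n : ℕ) :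
    ∫ t in (0 : ℝ)..θ, (z * exp (t * I)) ^ n / n =
      I * (z ^ n / (n : ℂ) ^ 2 - (z * exp (θ * I)) ^ n / (n : ℂ) ^ 2) := by
  rcases eq_or_ne n 0 with rfl | hn
  · simp
  have h_deriv (t : ℝ) : HasDerivAt (fun t : ℝ ↦ -I * ((z * exp (t * I)) ^ n / (n : ℂ) ^ 2))
      ((z * exp (t * I)) ^ n / n) t := by
    have h_arc : HasDerivAt (fun t : ℝ ↦ z * exp (t * I)) (z * (exp (t * I) * I)) t := by
      simpa using (((hasDerivAt_id t).ofReal_comp.mul_const I).cexp).const_mul z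
    convert! ((h_arc.pow n).div_const ((n : ℂ) ^ 2)).const_mul (-I) using 1
    have h_cast : (n : ℂ) ≠ 0 := Nat.cast_ne_zero.mpr hn
    rw [← pow_sub_one_mul hn (z * exp (t * I))]
    field_simp
    rw [I_sq]
    ring
  rw [intervalIntegral.integral_eq_sub_of_hasDerivAt (fun t _ ↦ h_deriv t)
    (Continuous.intervalIntegrable (by fun_prop) _ _)]
  simp only [ofReal_zero, zero_mul, exp_zero, mul_one]
  ring

lemma Li2_mul_exp_mul_I_of_norm_lt_one {z : ℂ} (hz : ‖z‖ < 1) (θ : ℝ) :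
    Li2 (z * exp (θ * I)) = Li2 z - I * ∫ t in (0 : ℝ)..θ, log (1 - z * exp (t * I)) := by
  have h_bound (n : ℕ) (t : ℝ) : ‖(z * exp (t * I)) ^ n / n‖ ≤ ‖z‖ ^ n := by
    rw [norm_div, norm_pow, norm_mul_exp_ofReal_mul_I, norm_natCast]
    rcases n.eq_zero_or_pos with rfl | hn
    · simp
    · exact div_le_self (by positivity) (Nat.one_le_cast.mpr hn)
  have h_log (t : ℝ) : HasSum (fun n : ℕ ↦ (z * exp (t * I)) ^ n / n)
      (-log (1 - z * exp (t * I))) :=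
    hasSum_taylorSeries_neg_log (by rwa [norm_mul_exp_ofReal_mul_I])
  have h_termwise := intervalIntegral.hasSum_integral_of_dominated_convergence (μ := volume)
    (a := 0) (b := θ) (fun n _ ↦ ‖z‖ ^ n)
    (fun n ↦ Continuous.aestronglyMeasurable (by fun_prop))
    (fun n ↦ .of_forall fun t _ ↦ h_bound n t)
    (.of_forall fun _ _ ↦ summable_geometric_of_lt_one (norm_nonneg z) hz)
    intervalIntegrable_const (.of_forall fun t _ ↦ h_log t)
  simp_rw [integral_mul_exp_mul_I_pow_div, intervalIntegral.integral_neg] at h_termwise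
  have h_Li2 := ((hasSum_Li2 hz.le).sub
    (hasSum_Li2 ((norm_mul_exp_ofReal_mul_I z θ).trans_le hz.le))).mul_left I
  linear_combination I * h_Li2.unique h_termwise + (Li2 (z * exp (θ * I)) - Li2 z) * I_sq

end OpenDisc

section ClosedDisc

lemma norm_sub_le_two_mul_norm_sub_smul {E : Type*} [SeminormedAddCommGroup E] [NormedSpace ℝ E]
    {x y : E} (hyx : ‖y‖ ≤ ‖x‖) {r : ℝ} (hr0 : 0 ≤ r) (hr1 : r ≤ 1) :
    ‖x - y‖ ≤ 2 * ‖x - r • y‖ := by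
  have h_radial : ‖(1 - r) • y‖ ≤ ‖x - r • y‖ :=
    calc ‖(1 - r) • y‖ = ‖y‖ - ‖r • y‖ := by
          rw [norm_smul_of_nonneg (sub_nonneg.mpr hr1), norm_smul_of_nonneg hr0]; ring
      _ ≤ ‖x‖ - ‖r • y‖ := by gcongr
      _ ≤ ‖x - r • y‖ := norm_sub_norm_le _ _
  calc ‖x - y‖ = ‖(x - r • y) - (1 - r) • y‖ := by congr 1; module
    _ ≤ ‖x - r • y‖ + ‖(1 - r) • y‖ := norm_sub_le _ _
    _ ≤ 2 * ‖x - r • y‖ := by linarith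

lemma norm_log_le_abs_log_norm_add_pi (z : ℂ) : ‖log z‖ ≤ |Real.log ‖z‖| + Real.pi := by
  refine (norm_le_abs_re_add_abs_im _).trans ?_
  rw [log_re, log_im]
  gcongr
  exact abs_arg_le_pi z

lemma norm_log_one_sub_ofReal_mul_le {w : ℂ} (hw : ‖w‖ ≤ 1) (hw1 : w ≠ 1) {r : ℝ} (hr0 : 0 ≤ r)
    (hr1 : r ≤ 1) :
    ‖log (1 - r * w)‖ ≤ |Real.log ‖(1 - w) / 2‖| + Real.log 2 + Real.pi := by
  have h_pos : 0 < ‖(1 - w) / 2‖ := by simpa [sub_eq_zero] using hw1.symm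
  have h_lower : ‖(1 - w) / 2‖ ≤ ‖1 - r * w‖ := by
    have h := norm_sub_le_two_mul_norm_sub_smul (hw.trans_eq norm_one.symm) hr0 hr1
    rw [real_smul] at h
    rw [norm_div, norm_ofNat]
    linarith
  have h_upper : ‖1 - r * w‖ ≤ 2 := by
    refine (norm_sub_le _ _).trans ?_
    linarith [norm_ofReal_mul_le_one hr0 hr1 hw, norm_one (α := ℂ)]
  calc ‖log (1 - r * w)‖ ≤ |Real.log ‖1 - r * w‖| + Real.pi := norm_log_le_abs_log_norm_add_pi _
    _ ≤ max |Real.log ‖(1 - w) / 2‖| |Real.log 2| + Real.pi := by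
        gcongr
        exact abs_le_max_abs_abs (Real.log_le_log h_pos h_lower)
          (Real.log_le_log (h_pos.trans_le h_lower) h_upper)
    _ ≤ |Real.log ‖(1 - w) / 2‖| + Real.log 2 + Real.pi := by
        rw [abs_of_nonneg (Real.log_nonneg one_le_two)]
        gcongr
        exact max_le_add_of_nonneg (abs_nonneg _) (Real.log_nonneg one_le_two)

lemma one_sub_mem_slitPlane {w : ℂ} (hw : ‖w‖ ≤ 1) (hw1 : w ≠ 1) : 1 - w ∈ slitPlane := by
  rw [mem_slitPlane_iff, sub_re, sub_im, one_re, one_im, zero_sub, neg_ne_zero, sub_pos]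
  rcases ((re_le_norm w).trans hw).lt_or_eq with h_re | h_re
  · exact .inl h_re
  · exact .inr fun h_im ↦ hw1 (Complex.ext h_re h_im)

lemma intervalIntegrable_log_norm_one_sub_mul_exp_div_two (z : ℂ) (a b : ℝ) :
    IntervalIntegrable (fun t : ℝ ↦ Real.log ‖(1 - z * exp (t * I)) / 2‖) volume a b := by
  refine MeromorphicOn.intervalIntegrable_log_norm fun t _ ↦ AnalyticAt.meromorphicAt ?_
  have h_complex : AnalyticAt ℂ (fun w : ℂ ↦ (1 - z * exp (w * I)) / 2) t := by
    fun_prop (disch := norm_num)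
  exact (h_complex.restrictScalars (𝕜 := ℝ)).comp (ofRealCLM.analyticAt t)

lemma ae_mul_exp_mul_I_ne (z : ℂ) {w : ℂ} (hw : w ≠ 0) : ∀ᵐ t : ℝ, z * exp (t * I) ≠ w := by
  have h_inj : Function.Injective fun t : ℝ ↦ (t * I : ℂ) :=
    (mul_left_injective₀ I_ne_zero).comp ofReal_injective
  have h_countable := ((Set.countable_singleton (w / z)).preimage_cexp.preimage h_inj)
  filter_upwards [h_countable.ae_notMem volume] with t ht h_eq
  have hz : z ≠ 0 := left_ne_zero_of_mul (h_eq ▸ hw)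
  exact ht (eq_div_of_mul_eq hz ((mul_comm _ _).trans h_eq))

-- When `‖z‖ = 1` the integrands are not uniformly bounded near the points with `z e^{it} = 1`;
-- since `‖1 - w‖ ≤ 2 ‖1 - r w‖`, the integrable singularity of `log ‖1 - z e^{it}‖` dominates them.
lemma tendsto_integral_log_one_sub_ofReal_mul {z : ℂ} (hz : ‖z‖ ≤ 1) (θ : ℝ) :
    Tendsto (fun r : ℝ ↦ ∫ t in (0 : ℝ)..θ, log (1 - r * (z * exp (t * I)))) (𝓝[<] 1)
      (𝓝 (∫ t in (0 : ℝ)..θ, log (1 - z * exp (t * I)))) := by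
  have h_norm (t : ℝ) : ‖z * exp (t * I)‖ ≤ 1 := (norm_mul_exp_ofReal_mul_I z t).trans_le hz
  refine intervalIntegral.tendsto_integral_filter_of_dominated_convergence
    (fun t ↦ |Real.log ‖(1 - z * exp (t * I)) / 2‖| + Real.log 2 + Real.pi)
    (.of_forall fun r ↦ Measurable.aestronglyMeasurable (by fun_prop)) ?_
    (((intervalIntegrable_log_norm_one_sub_mul_exp_div_two z 0 θ).abs.add
      intervalIntegrable_const).add intervalIntegrable_const) ?_
  · filter_upwards [Ico_mem_nhdsLT (zero_lt_one' ℝ)] with r hr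
    filter_upwards [ae_mul_exp_mul_I_ne z one_ne_zero] with t ht _
    exact norm_log_one_sub_ofReal_mul_le (h_norm t) ht hr.1 hr.2.le
  · filter_upwards [ae_mul_exp_mul_I_ne z one_ne_zero] with t ht _
    have h_cont : Continuous fun r : ℝ ↦ 1 - r * (z * exp (t * I)) := by fun_prop
    refine Tendsto.clog ?_ (one_sub_mem_slitPlane (h_norm t) ht)
    simpa using (h_cont.tendsto 1).mono_left nhdsWithin_le_nhds

lemma Li2_mul_exp_mul_I {z : ℂ} (hz : ‖z‖ ≤ 1) (θ : ℝ) :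
    Li2 (z * exp (θ * I)) = Li2 z - I * ∫ t in (0 : ℝ)..θ, log (1 - z * exp (t * I)) := by
  refine tendsto_nhds_unique
    (tendsto_Li2_ofReal_mul ((norm_mul_exp_ofReal_mul_I z θ).trans_le hz))
    (((tendsto_Li2_ofReal_mul hz).sub
      ((tendsto_integral_log_one_sub_ofReal_mul hz θ).const_mul I)).congr' ?_)
  filter_upwards [Ico_mem_nhdsLT (zero_lt_one' ℝ)] with r hr
  simpa only [mul_assoc] using
    (Li2_mul_exp_mul_I_of_norm_lt_one (norm_ofReal_mul_lt_one hr.1 hr.2 hz) θ).symm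

end ClosedDisc

section UnitCircle

lemma one_sub_exp_two_mul_mul_I (t : ℝ) :
    1 - exp ((2 * t : ℝ) * I) = (2 * Real.sin t : ℝ) * exp ((t - Real.pi / 2 : ℝ) * I) := by
  rw [exp_mul_I, exp_mul_I, ← ofReal_cos, ← ofReal_sin, ← ofReal_cos, ← ofReal_sin,
    Real.cos_two_mul, Real.sin_two_mul, Real.cos_sub_pi_div_two, Real.sin_sub_pi_div_two]
  push_cast
  linear_combination -2 * sin_sq_add_cos_sq (t : ℂ)

lemma log_one_sub_exp_two_mul_mul_I {t : ℝ} (ht0 : 0 < t) (htpi : t < Real.pi) :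
    log (1 - exp ((2 * t : ℝ) * I)) =
      Real.log |2 * Real.sin t| + (t - Real.pi / 2 : ℝ) * I := by
  have h_sin : 0 < 2 * Real.sin t := mul_pos two_pos (Real.sin_pos_of_pos_of_lt_pi ht0 htpi)
  rw [one_sub_exp_two_mul_mul_I, log_ofReal_mul h_sin (exp_ne_zero _), abs_of_pos h_sin,
    log_exp] <;>
    rw [im_ofReal_mul, I_im, mul_one] <;> linarith

lemma intervalIntegrable_log_abs_two_mul_sin (a b : ℝ) :
    IntervalIntegrable (fun t ↦ Real.log |2 * Real.sin t|) volume a b := by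
  have h_analytic : AnalyticOnNhd ℝ (fun t ↦ 2 * Real.sin t) (Set.uIcc a b) := fun t _ ↦ by
    fun_prop
  exact h_analytic.meromorphicOn.intervalIntegrable_log_norm

lemma integral_log_one_sub_exp_mul_I {θ : ℝ} (h0 : 0 ≤ θ) (hpi : θ ≤ Real.pi) :
    ∫ t in (0 : ℝ)..2 * θ, log (1 - exp (t * I)) =
      -2 * Lob θ + θ * (θ - Real.pi) * I := by
  have h_split : ∫ t in (0 : ℝ)..θ, log (1 - exp ((2 * t : ℝ) * I)) =
      ∫ t in (0 : ℝ)..θ,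
        ((Real.log |2 * Real.sin t| : ℂ) + (t - Real.pi / 2 : ℝ) * I) := by
    rw [intervalIntegral.integral_of_le h0, intervalIntegral.integral_of_le h0,
      integral_Ioc_eq_integral_Ioo, integral_Ioc_eq_integral_Ioo]
    exact setIntegral_congr_fun measurableSet_Ioo fun t ht ↦
      log_one_sub_exp_two_mul_mul_I ht.1 (ht.2.trans_le hpi)
  have h_linear : ∫ t in (0 : ℝ)..θ, (t - Real.pi / 2) = θ * (θ - Real.pi) / 2 := by
    rw [intervalIntegral.integral_sub (by simp) (by simp), integral_id,
      intervalIntegral.integral_const, smul_eq_mul]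
    ring
  have h_scale := intervalIntegral.smul_integral_comp_mul_left (a := 0) (b := θ)
    (fun t : ℝ ↦ log (1 - exp (t * I))) 2
  rw [mul_zero] at h_scale
  have h_log : IntervalIntegrable (fun t ↦ (Real.log |2 * Real.sin t| : ℂ)) volume 0 θ :=
    have h := intervalIntegrable_log_abs_two_mul_sin 0 θ
    ⟨h.1.ofReal, h.2.ofReal⟩
  rw [← h_scale, h_split, intervalIntegral.integral_add h_log
    (Continuous.intervalIntegrable (by fun_prop) _ _),
    intervalIntegral.integral_mul_const, intervalIntegral.integral_ofReal,
    intervalIntegral.integral_ofReal, h_linear, Lob, real_smul]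
  push_cast
  ring

end UnitCircle

end

/-- For `0 ≤ θ ≤ π`, `Li₂(e^{2iθ}) = π²/6 + θ(θ-π) + 2i·Λ(θ)`. -/
theorem Li2_unitCircle (θ : ℝ) (h0 : 0 ≤ θ) (h1 : θ ≤ Real.pi) :
    Li2 (Complex.exp (2 * Complex.I * (θ : ℂ))) =
      (Real.pi : ℂ) ^ 2 / 6 + (θ : ℂ) * ((θ : ℂ) - (Real.pi : ℂ)) +
        2 * Complex.I * (Lob θ : ℂ) := by
  have h_arc := Li2_mul_exp_mul_I norm_one.le (2 * θ)
  simp only [one_mul] at h_arc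
  rw [integral_log_one_sub_exp_mul_I h0 h1, Li2_one] at h_arc
  calc Li2 (exp (2 * I * θ)) = Li2 (exp ((2 * θ : ℝ) * I)) := by congr 2; push_cast; ring
    _ = _ := by
      rw [h_arc]
      linear_combination (-θ * (θ - Real.pi) : ℂ) * I_sq
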